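/- Let γ : [0,1] → D be a C^∞ path with γ(0) = (0,0) and γ(1) ∈ ∂D, and for g ∈ G_o define σ_γ(g) = ∫₀¹ (g*λ − λ)_{γ(t)}(γ'(t)) dt. Then for every g ∈ G_o the limit lim_{n→∞} σ_γ(gⁿ)/n exists and is independent of the choice of γ; in particular it equals lim_{n→∞} σ(gⁿ)/n computed with the radial path γ₀(t) = (t,0). That is, the homogenization σ̄ is independent of the choice of path from the origin to the boundary. -/

import Mathlib

open MeasureTheory Filter Topology Set Function Real

noncomputable section

/-- The closed unit disk in `ℝ²`. -/
def disk : Set (ℝ × ℝ) := {p | p.1 ^ 2 + p.2 ^ 2 ≤ 1}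

/-- The boundary circle of the unit disk. -/
def bdry : Set (ℝ × ℝ) := {p | p.1 ^ 2 + p.2 ^ 2 = 1}

/-- Partial derivative in the `x`-direction. -/
def pdx (f : ℝ × ℝ → ℝ) (p : ℝ × ℝ) : ℝ := fderiv ℝ f p (1, 0)

/-- Partial derivative in the `y`-direction. -/
def pdy (f : ℝ × ℝ → ℝ) (p : ℝ × ℝ) : ℝ := fderiv ℝ f p (0, 1)

/-- The Jacobian determinant of a map `ℝ² → ℝ²`. -/
def jacDet (g : ℝ × ℝ → ℝ × ℝ) (p : ℝ × ℝ) : ℝ :=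
  pdx (fun q => (g q).1) p * pdy (fun q => (g q).2) p -
    pdy (fun q => (g q).1) p * pdx (fun q => (g q).2) p

/-- `g` represents an element of `Symp(D)`: a `C^∞` diffeomorphism of the closed
unit disk onto itself (smooth up to the boundary, i.e. the restriction of a
globally smooth map with globally smooth inverse on the disk) whose Jacobian
determinant is identically `1` on the disk. -/
def IsSymp (g : ℝ × ℝ → ℝ × ℝ) : Prop :=
  ContDiff ℝ (⊤ : ℕ∞) g ∧ MapsTo g disk disk ∧ (∀ p ∈ disk, jacDet g p = 1) ∧
    ∃ g' : ℝ × ℝ → ℝ × ℝ, ContDiff ℝ (⊤ : ℕ∞) g' ∧ MapsTo g' disk disk ∧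
      (∀ p ∈ disk, g' (g p) = p) ∧ (∀ p ∈ disk, g (g' p) = p)

/-- `g` represents an element of `G_o`: a symplectomorphism of the disk fixing the origin. -/
def IsSympO (g : ℝ × ℝ → ℝ × ℝ) : Prop :=
  IsSymp g ∧ g (0, 0) = (0, 0)

/-- `τ_λ(g) = ∫_D g*λ ∧ λ` for `λ = (x dy - y dx)/2`, written out in coordinates. -/
def tauL (g : ℝ × ℝ → ℝ × ℝ) : ℝ :=
  (1 / 4) * ∫ p in disk,
    (p.1 * ((g p).1 * pdx (fun q => (g q).2) p - (g p).2 * pdx (fun q => (g q).1) p) +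
     p.2 * ((g p).1 * pdy (fun q => (g q).2) p - (g p).2 * pdy (fun q => (g q).1) p))

/-- `σ(g) = ∫_γ (g*λ - λ)` along the radial path `γ(t) = (t,0)`, in coordinates. -/
def sigmaQ (g : ℝ × ℝ → ℝ × ℝ) : ℝ :=
  (1 / 2) * ∫ t in (0:ℝ)..1,
    ((g (t, 0)).1 * pdx (fun q => (g q).2) (t, 0) -
      (g (t, 0)).2 * pdx (fun q => (g q).1) (t, 0))

/-- `G` is a smooth isotopy in `Symp(D)` starting at the identity. -/
def IsIsotopy (G : ℝ → ℝ × ℝ → ℝ × ℝ) : Prop :=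
  ContDiff ℝ (⊤ : ℕ∞) (fun q : ℝ × (ℝ × ℝ) => G q.1 q.2) ∧
    (∀ t ∈ Icc (0:ℝ) 1, IsSymp (G t)) ∧ (∀ p ∈ disk, G 0 p = p)

/-- `f` is a family of Hamiltonian functions for the isotopy `G`, i.e.
`i_{X_t} ω = d f_t` where `X_t = (∂g_t/∂t) ∘ g_t⁻¹`; since `g_t` maps the disk
onto itself this is expressed at the points `G t p`, `p ∈ D`. -/
def IsHam (G : ℝ → ℝ × ℝ → ℝ × ℝ) (f : ℝ → ℝ × ℝ → ℝ) : Prop :=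
  ContDiff ℝ (⊤ : ℕ∞) (fun q : ℝ × (ℝ × ℝ) => f q.1 q.2) ∧
    ∀ t ∈ Icc (0:ℝ) 1, ∀ p ∈ disk,
      pdx (f t) (G t p) = -(deriv (fun s => G s p) t).2 ∧
      pdy (f t) (G t p) = (deriv (fun s => G s p) t).1

/-- `φ` is the lift of the boundary isotopy of `G`, with `φ 0 = id`. -/
def IsBoundaryLift (G : ℝ → ℝ × ℝ → ℝ × ℝ) (φ : ℝ → ℝ → ℝ) : Prop :=
  ContDiff ℝ (⊤ : ℕ∞) (fun q : ℝ × ℝ => φ q.1 q.2) ∧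
    (∀ t ∈ Icc (0:ℝ) 1, StrictMono (φ t) ∧ ∀ θ : ℝ, φ t (θ + 2 * π) = φ t θ + 2 * π) ∧
    (∀ θ : ℝ, φ 0 θ = θ) ∧
    (∀ t ∈ Icc (0:ℝ) 1, ∀ θ : ℝ,
      G t (Real.cos θ, Real.sin θ) = (Real.cos (φ t θ), Real.sin (φ t θ)))

/-- `σ_γ(g) = ∫_γ (g*λ - λ)`: the line integral of `g*λ - λ` along a path `γ`. -/
def sigmaPath (γ : ℝ → ℝ × ℝ) (g : ℝ × ℝ → ℝ × ℝ) : ℝ :=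
  ∫ t in (0:ℝ)..1,
    ((1 / 2) * ((g (γ t)).1 * fderiv ℝ (fun q => (g q).2) (γ t) (deriv γ t) -
        (g (γ t)).2 * fderiv ℝ (fun q => (g q).1) (γ t) (deriv γ t)) -
     (1 / 2) * ((γ t).1 * (deriv γ t).2 - (γ t).2 * (deriv γ t).1))

/-!
Since `g` preserves area, `g*λ - λ = dS` on the disk, and telescoping gives `(gⁿ)*λ - λ = dSₙ`,
where `Sₙ = S + S ∘ g + ⋯ + S ∘ gⁿ⁻¹`. Hence `σ_γ(gⁿ) = Sₙ(γ 1) - n S(0)`, and it remains to see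
that `Sₙ / n` converges on the boundary circle to a constant. On that circle `2λ` is `dθ`, so
`dS = (g*dθ - dθ) / 2`: a lift `φ` of the circle homeomorphism `g` is `θ ↦ θ + 2 S(e^{iθ}) + C`.
Therefore `Sₙ(e^{iθ}) = (φⁿ(θ) - θ - n C) / 2`, and `(φⁿ(θ) - θ) / n` tends to the translation
number of `φ` (measured in radians), whatever `θ` is.
-/

lemma contDiff_iterate {𝕜 E : Type*} [NontriviallyNormedField 𝕜] [NormedAddCommGroup E]
    [NormedSpace 𝕜 E] {m : WithTop ℕ∞} {f : E → E} (hf : ContDiff 𝕜 m f) (n : ℕ) :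
    ContDiff 𝕜 m f^[n] := by
  induction n with
  | zero => exact contDiff_id
  | succ n ih => exact ih.comp hf

section PullbackDefect

variable {E F : Type*} [NormedAddCommGroup E] [NormedSpace ℝ E]
  [NormedAddCommGroup F] [NormedSpace ℝ F] {B : E →L[ℝ] E →L[ℝ] F} {f g : E → E} {s : Set E}

/-- The `1`-form `g*β - β`, where `β` is the `1`-form with linear coefficients `β_p(v) = B p v`. -/
def pullbackDefect (B : E →L[ℝ] E →L[ℝ] F) (g : E → E) (p : E) : E →L[ℝ] F :=
  (B (g p)).comp (fderiv ℝ g p) - B p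

lemma pullbackDefect_apply (p v : E) :
    pullbackDefect B g p v = B (g p) (fderiv ℝ g p v) - B p v :=
  rfl

lemma pullbackDefect_id : pullbackDefect B id = 0 := by
  ext p v
  simp [pullbackDefect_apply]

lemma pullbackDefect_comp {p : E} (hg : DifferentiableAt ℝ g (f p))
    (hf : DifferentiableAt ℝ f p) :
    pullbackDefect B (g ∘ f) p =
      pullbackDefect B f p + (pullbackDefect B g (f p)).comp (fderiv ℝ f p) := by
  ext v
  simp [pullbackDefect_apply, fderiv_comp p hg hf]

lemma continuous_pullbackDefect (hg : ContDiff ℝ 1 g) : Continuous (pullbackDefect B g) :=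
  ((B.continuous.comp hg.continuous).clm_comp (hg.continuous_fderiv one_ne_zero)).sub
    B.continuous

lemma exists_primitive_pullbackDefect [CompleteSpace F] (hs : Convex ℝ s) (hg : ContDiff ℝ 2 g)
    (hB : ∀ p ∈ s, ∀ x y, B (fderiv ℝ g p x) (fderiv ℝ g p y) -
      B (fderiv ℝ g p y) (fderiv ℝ g p x) = B x y - B y x) :
    ∃ S : E → F, ∀ p ∈ s, HasFDerivWithinAt S (pullbackDefect B g p) s p := by
  have hdg (p : E) : HasFDerivAt g (fderiv ℝ g p) p :=
    (hg.differentiable two_ne_zero p).hasFDerivAt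
  have hddg (p : E) : HasFDerivAt (fderiv ℝ g) (fderiv ℝ (fderiv ℝ g) p) p :=
    ((hg.fderiv_right le_rfl).differentiable one_ne_zero p).hasFDerivAt
  refine hs.exists_forall_hasFDerivWithinAt_of_hasFDerivWithinAt_symmetric (fun p _ ↦
    (((B.hasFDerivAt.comp p (hdg p)).clm_comp (hddg p)).sub B.hasFDerivAt).hasFDerivWithinAt) ?_
  intro p hp x _ y _
  have hsymm : fderiv ℝ (fderiv ℝ g) p x y = fderiv ℝ (fderiv ℝ g) p y x :=
    hg.contDiffAt.isSymmSndFDerivAt (by simp) x y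
  change B (g p) (fderiv ℝ (fderiv ℝ g) p x y) + B (fderiv ℝ g p x) (fderiv ℝ g p y) - B x y =
    B (g p) (fderiv ℝ (fderiv ℝ g) p y x) + B (fderiv ℝ g p y) (fderiv ℝ g p x) - B y x
  rw [hsymm]
  linear_combination (norm := module) hB p hp x y

-- Pulling back `g*β - β` along the iterates of `g` makes `(gⁿ)*β - β` telescope.
lemma hasFDerivWithinAt_birkhoffSum {S : E → F} (hg : Differentiable ℝ g) (hgs : MapsTo g s s)
    (hS : ∀ p ∈ s, HasFDerivWithinAt S (pullbackDefect B g p) s p) (n : ℕ) {p : E} (hp : p ∈ s) :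
    HasFDerivWithinAt (birkhoffSum g S n) (pullbackDefect B g^[n] p) s p := by
  induction n with
  | zero =>
    rw [birkhoffSum_zero', iterate_zero, pullbackDefect_id]
    exact hasFDerivWithinAt_const (0 : F) p s
  | succ n ih =>
    have hgn : DifferentiableAt ℝ g^[n] p := hg.iterate n p
    rw [iterate_succ', pullbackDefect_comp (hg _) hgn, funext (birkhoffSum_succ g S n)]
    exact ih.add ((hS _ (hgs.iterate n hp)).comp p hgn.hasFDerivAt.hasFDerivWithinAt
      (hgs.iterate n))

end PullbackDefect

lemma integral_apply_deriv_eq_sub {E F : Type*} [NormedAddCommGroup E] [NormedSpace ℝ E]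
    [NormedAddCommGroup F] [NormedSpace ℝ F] [CompleteSpace F] {s : Set E} {S : E → F}
    {ω : E → E →L[ℝ] F} (hS : ∀ p ∈ s, HasFDerivWithinAt S (ω p) s p) (hω : ContinuousOn ω s)
    {γ : ℝ → E} (hγ : ContDiff ℝ 1 γ) {a b : ℝ} (hab : a ≤ b) (hγs : MapsTo γ (Icc a b) s) :
    ∫ t in a..b, ω (γ t) (deriv γ t) = S (γ b) - S (γ a) := by
  have hderiv {t : ℝ} (ht : t ∈ Icc a b) :
      HasDerivWithinAt (S ∘ γ) (ω (γ t) (deriv γ t)) (Icc a b) t :=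
    (hS _ (hγs ht)).comp_hasDerivWithinAt t
      (hγ.differentiable one_ne_zero t).hasDerivAt.hasDerivWithinAt hγs
  refine intervalIntegral.integral_eq_sub_of_hasDerivAt_of_le hab
    (fun t ht ↦ (hderiv ht).continuousWithinAt)
    (fun t ht ↦ (hderiv (Ioo_subset_Icc_self ht)).hasDerivAt (Icc_mem_nhds ht.1 ht.2)) ?_
  refine ContinuousOn.intervalIntegrable_of_Icc hab ?_
  exact (hω.comp hγ.continuous.continuousOn hγs).clm_apply
    (hγ.continuous_deriv le_rfl).continuousOn

-- At an interior image point, `f` maps both `𝓝[K] p` and `𝓝 p` onto `𝓝 (f p)`, so the two agree.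
lemma mem_frontier_of_bijOn_of_hasStrictFDerivAt {E F : Type*} [NormedAddCommGroup E]
    [NormedSpace ℝ E] [CompleteSpace E] [NormedAddCommGroup F] [NormedSpace ℝ F]
    {K : Set E} {L : Set F} {f : E → F} {f' : E ≃L[ℝ] F} {p : E} (hK : IsCompact K)
    (hf : ContinuousOn f K) (hKL : BijOn f K L) (hf' : HasStrictFDerivAt f (f' : E →L[ℝ] F) p)
    (hp : p ∈ frontier K) : f p ∈ frontier L := by
  have hpK : p ∈ K := hK.isClosed.frontier_subset hp
  refine ⟨subset_closure (hKL.mapsTo hpK), fun hfp ↦ hp.2 (mem_interior_iff_mem_nhds.2 ?_)⟩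
  have : CompactSpace K := isCompact_iff_compactSpace.1 hK
  have hmap : map f (𝓝[K] p) = map f (𝓝 p) := by
    have hemb :=
      (hf.domRestrict.isClosedEmbedding hKL.injOn.injective).isInducing.map_nhds_eq ⟨p, hpK⟩
    rw [range_domRestrict, hKL.image_eq] at hemb
    rw [hf'.map_nhds_eq_of_equiv, ← nhdsWithin_eq_nhds.2 (mem_interior_iff_mem_nhds.1 hfp),
      ← map_nhds_subtype_val (⟨p, hpK⟩ : K), map_map]
    exact hemb
  let e := hf'.toOpenPartialHomeomorph f
  have he : e.source ∈ 𝓝 p := e.open_source.mem_nhds hf'.mem_toOpenPartialHomeomorph_source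
  have hnhds := (map_eq_map_iff_of_injOn (mem_nhdsWithin_of_mem_nhds he) he e.injOn).1 hmap
  exact hnhds ▸ self_mem_nhdsWithin

section Plane

lemma det_eq_of_prod (A : ℝ × ℝ →L[ℝ] ℝ × ℝ) :
    A.det = (A (1, 0)).1 * (A (0, 1)).2 - (A (0, 1)).1 * (A (1, 0)).2 := by
  rw [ContinuousLinearMap.det, ← LinearMap.det_toMatrix (Module.Basis.finTwoProd ℝ),
    Matrix.det_fin_two]
  simp [LinearMap.toMatrix_apply]

lemma jacDet_eq_det_fderiv {g : ℝ × ℝ → ℝ × ℝ} {p : ℝ × ℝ} (hg : DifferentiableAt ℝ g p) :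
    jacDet g p = (fderiv ℝ g p).det := by
  simp [jacDet, pdx, pdy, det_eq_of_prod, hg.hasFDerivAt.fst.fderiv, hg.hasFDerivAt.snd.fderiv]

/-- The form `λ = (x dy - y dx)/2`, as the bilinear map `(p, v) ↦ λ_p(v)`. -/
def liouvilleForm : ℝ × ℝ →L[ℝ] ℝ × ℝ →L[ℝ] ℝ :=
  (1 / 2 : ℝ) • ((ContinuousLinearMap.fst ℝ ℝ ℝ).smulRight (ContinuousLinearMap.snd ℝ ℝ ℝ) -
    (ContinuousLinearMap.snd ℝ ℝ ℝ).smulRight (ContinuousLinearMap.fst ℝ ℝ ℝ))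

lemma liouvilleForm_apply (p v : ℝ × ℝ) :
    liouvilleForm p v = (1 / 2) * (p.1 * v.2 - p.2 * v.1) := by
  simp [liouvilleForm]

lemma im_conj_mul_eq_two_mul_liouvilleForm (p v : ℝ × ℝ) :
    (starRingEnd ℂ (Complex.equivRealProdCLM.symm p) * Complex.equivRealProdCLM.symm v).im =
      2 * liouvilleForm p v := by
  have hmk (q : ℝ × ℝ) : Complex.equivRealProdCLM.symm q = ⟨q.1, q.2⟩ := rfl
  rw [hmk, hmk, Complex.mul_im, Complex.conj_re, Complex.conj_im, liouvilleForm_apply]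
  ring

lemma liouvilleForm_map_sub_swap (A : ℝ × ℝ →L[ℝ] ℝ × ℝ) (x y : ℝ × ℝ) :
    liouvilleForm (A x) (A y) - liouvilleForm (A y) (A x) =
      A.det * (liouvilleForm x y - liouvilleForm y x) := by
  have hA (v : ℝ × ℝ) : A v = v.1 • A (1, 0) + v.2 • A (0, 1) := by
    rw [← map_smul, ← map_smul, ← map_add]
    simp
  rw [hA x, hA y, det_eq_of_prod]
  simp only [liouvilleForm_apply, Prod.fst_add, Prod.snd_add, Prod.smul_fst, Prod.smul_snd,
    smul_eq_mul]
  ring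

lemma sigmaPath_eq_integral_pullbackDefect {g : ℝ × ℝ → ℝ × ℝ} (hg : Differentiable ℝ g)
    (γ : ℝ → ℝ × ℝ) :
    sigmaPath γ g = ∫ t in (0 : ℝ)..1, pullbackDefect liouvilleForm g (γ t) (deriv γ t) := by
  simp [sigmaPath, pullbackDefect_apply, liouvilleForm_apply, (hg _).hasFDerivAt.fst.fderiv,
    (hg _).hasFDerivAt.snd.fderiv]

lemma sigmaQ_eq_sigmaPath (g : ℝ × ℝ → ℝ × ℝ) : sigmaQ g = sigmaPath (fun t ↦ (t, 0)) g := by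
  have hderiv (t : ℝ) : deriv (fun t : ℝ ↦ (t, (0 : ℝ))) t = (1, 0) :=
    ((hasDerivAt_id t).prodMk (hasDerivAt_const t 0)).deriv
  simp [sigmaQ, sigmaPath, hderiv, pdx]

lemma norm_equivRealProdCLM_symm_sq (p : ℝ × ℝ) :
    ‖Complex.equivRealProdCLM.symm p‖ ^ 2 = p.1 ^ 2 + p.2 ^ 2 := by
  rw [Complex.equivRealProdCLM_symm_apply, Complex.sq_norm, Complex.normSq_add_mul_I]

lemma disk_eq_preimage_closedBall :
    disk = Complex.equivRealProdCLM.symm ⁻¹' Metric.closedBall 0 1 := by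
  ext p
  rw [mem_preimage, mem_closedBall_zero_iff, ← sq_le_one_iff₀ (norm_nonneg _),
    norm_equivRealProdCLM_symm_sq]
  rfl

lemma bdry_eq_preimage_sphere : bdry = Complex.equivRealProdCLM.symm ⁻¹' Metric.sphere 0 1 := by
  ext p
  rw [mem_preimage, mem_sphere_zero_iff_norm,
    ← pow_eq_one_iff_of_nonneg (norm_nonneg _) two_ne_zero, norm_equivRealProdCLM_symm_sq]
  rfl

lemma convex_disk : Convex ℝ disk := by
  rw [disk_eq_preimage_closedBall]
  exact (convex_closedBall _ _).linear_preimage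
    (Complex.equivRealProdCLM.symm.toLinearEquiv : ℝ × ℝ →ₗ[ℝ] ℂ)

lemma isCompact_disk : IsCompact disk := by
  rw [disk_eq_preimage_closedBall]
  exact Complex.equivRealProdCLM.symm.toHomeomorph.isCompact_preimage.2 (isCompact_closedBall _ _)

lemma frontier_disk : frontier disk = bdry := by
  rw [disk_eq_preimage_closedBall, bdry_eq_preimage_sphere, ← frontier_closedBall' (0 : ℂ)]
  exact (Complex.equivRealProdCLM.symm.toHomeomorph.preimage_frontier _).symm

lemma bdry_subset_disk : bdry ⊆ disk :=
  fun _ hp ↦ le_of_eq hp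

lemma mapsTo_bdry_of_bijOn_disk {g : ℝ × ℝ → ℝ × ℝ} (hg : ContDiff ℝ 1 g)
    (hgD : BijOn g disk disk) (hdet : ∀ p ∈ bdry, (fderiv ℝ g p).det ≠ 0) :
    MapsTo g bdry bdry := by
  intro p hp
  have hstrict : HasStrictFDerivAt g
      ((fderiv ℝ g p).toContinuousLinearEquivOfDetNeZero (hdet p hp) : ℝ × ℝ →L[ℝ] ℝ × ℝ) p :=
    hg.contDiffAt.hasStrictFDerivAt one_ne_zero
  rw [← frontier_disk] at hp ⊢
  exact mem_frontier_of_bijOn_of_hasStrictFDerivAt isCompact_disk hg.continuous.continuousOn hgD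
    hstrict hp

end Plane

section CircleMaps

/-- The parametrization `θ ↦ e^{iθ}` of the unit circle, in real coordinates. -/
def circlePoint (θ : ℝ) : ℝ × ℝ := (cos θ, sin θ)

lemma circlePoint_mem_bdry (θ : ℝ) : circlePoint θ ∈ bdry :=
  cos_sq_add_sin_sq θ

lemma circlePoint_add_two_pi (θ : ℝ) : circlePoint (θ + 2 * π) = circlePoint θ := by
  simp [circlePoint]

lemma hasDerivAt_circlePoint (θ : ℝ) : HasDerivAt circlePoint (-sin θ, cos θ) θ :=
  (hasDerivAt_cos θ).prodMk (hasDerivAt_sin θ)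

lemma liouvilleForm_circlePoint (θ : ℝ) :
    liouvilleForm (circlePoint θ) (-sin θ, cos θ) = 1 / 2 := by
  simp only [liouvilleForm_apply, circlePoint]
  linear_combination (1 / 2) * sin_sq_add_cos_sq θ

lemma equivRealProdCLM_symm_circlePoint (θ : ℝ) :
    Complex.equivRealProdCLM.symm (circlePoint θ) = Complex.exp (θ * Complex.I) := by
  simp [circlePoint, Complex.exp_mul_I, Complex.equivRealProdCLM_symm_apply]

lemma exists_circlePoint_eq {p : ℝ × ℝ} (hp : p ∈ bdry) : ∃ θ, circlePoint θ = p := by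
  rw [bdry_eq_preimage_sphere, mem_preimage, mem_sphere_zero_iff_norm,
    Complex.norm_eq_one_iff] at hp
  obtain ⟨θ, hθ⟩ := hp
  exact ⟨θ, Complex.equivRealProdCLM.symm.injective
    ((equivRealProdCLM_symm_circlePoint θ).trans hθ)⟩

lemma exists_eq_exp_mul_I_of_hasDerivAt {z z' : ℝ → ℂ} {ψ : ℝ → ℝ} (hz : ∀ t, ‖z t‖ = 1)
    (hz' : ∀ t, HasDerivAt z (z' t) t)
    (hψ : ∀ t, HasDerivAt ψ (starRingEnd ℂ (z t) * z' t).im t) :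
    ∃ C : ℝ, ∀ t, z t = Complex.exp ((ψ t + C : ℝ) * Complex.I) := by
  have hconj (t : ℝ) : z t * starRingEnd ℂ (z t) = 1 := by simp [Complex.mul_conj', hz]
  have hre (t : ℝ) : (starRingEnd ℂ (z t) * z' t).re = 0 := by
    have hsq := (hz' t).norm_sq
    simp only [hz, Complex.inner] at hsq
    simpa [mul_comm] using hsq.unique (hasDerivAt_const t _)
  have hode (t : ℝ) : z' t = (starRingEnd ℂ (z t) * z' t).im * Complex.I * z t := by
    have him : starRingEnd ℂ (z t) * z' t = (starRingEnd ℂ (z t) * z' t).im * Complex.I := by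
      apply Complex.ext <;> simp [hre]
    rw [← him]
    linear_combination -z' t * hconj t
  have hconst (t : ℝ) : HasDerivAt (fun t ↦ z t * Complex.exp (-(ψ t * Complex.I))) 0 t := by
    convert! (hz' t).mul (((hψ t).ofReal_comp.mul_const Complex.I).neg.cexp) using 1
    linear_combination -Complex.exp (-(ψ t * Complex.I)) * hode t
  obtain ⟨C, hC⟩ := (Complex.norm_eq_one_iff (z 0 * Complex.exp (-(ψ 0 * Complex.I)))).1
    (by simp [hz, Complex.norm_exp])
  refine ⟨C, fun t ↦ ?_⟩
  have hzt := is_const_of_deriv_eq_zero (fun t ↦ (hconst t).differentiableAt)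
    (fun t ↦ (hconst t).deriv) t 0
  rw [← hC] at hzt
  rw [Complex.ofReal_add, add_mul, Complex.exp_add, ← hzt, mul_left_comm, ← Complex.exp_add]
  simp

lemma exists_lift_of_primitive {g : ℝ × ℝ → ℝ × ℝ} {S : ℝ × ℝ → ℝ} (hg : Differentiable ℝ g)
    (hgb : MapsTo g bdry bdry)
    (hS : ∀ p ∈ bdry, HasFDerivWithinAt S (pullbackDefect liouvilleForm g p) bdry p) :
    ∃ C : ℝ, ∀ θ, g (circlePoint θ) = circlePoint (θ + 2 * S (circlePoint θ) + C) := by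
  let w' (t : ℝ) : ℝ × ℝ := fderiv ℝ g (circlePoint t) (-sin t, cos t)
  have hw (t : ℝ) : HasDerivAt (g ∘ circlePoint) (w' t) t :=
    (hg _).hasFDerivAt.comp_hasDerivAt t (hasDerivAt_circlePoint t)
  have hSc (t : ℝ) : HasDerivAt (S ∘ circlePoint)
      (pullbackDefect liouvilleForm g (circlePoint t) (-sin t, cos t)) t :=
    ((hS _ (circlePoint_mem_bdry t)).comp_hasDerivWithinAt t
      (hasDerivAt_circlePoint t).hasDerivWithinAt
      (mapsTo_univ_iff.2 circlePoint_mem_bdry)).hasDerivAt univ_mem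
  have hψ (t : ℝ) : HasDerivAt (fun t ↦ t + 2 * S (circlePoint t))
      (starRingEnd ℂ (Complex.equivRealProdCLM.symm (g (circlePoint t))) *
        Complex.equivRealProdCLM.symm (w' t)).im t := by
    convert! (hasDerivAt_id t).add ((hSc t).const_mul 2) using 1
    rw [im_conj_mul_eq_two_mul_liouvilleForm, pullbackDefect_apply, liouvilleForm_circlePoint]
    ring
  have hnorm (t : ℝ) : ‖Complex.equivRealProdCLM.symm (g (circlePoint t))‖ = 1 :=
    mem_sphere_zero_iff_norm.1 (bdry_eq_preimage_sphere.subset (hgb (circlePoint_mem_bdry t)))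
  obtain ⟨C, hC⟩ := exists_eq_exp_mul_I_of_hasDerivAt hnorm
    (fun t ↦ Complex.equivRealProdCLM.symm.hasFDerivAt.comp_hasDerivAt t (hw t)) hψ
  refine ⟨C, fun θ ↦ Complex.equivRealProdCLM.symm.injective ?_⟩
  rw [equivRealProdCLM_symm_circlePoint]
  exact hC θ

lemma strictMono_of_map_add_const {φ : ℝ → ℝ} {T : ℝ} (hφ : Continuous φ) (hinj : Injective φ)
    (hT : 0 < T) (hφT : ∀ x, φ (x + T) = φ x + T) : StrictMono φ := by
  refine (hφ.strictMono_of_inj hinj).resolve_right fun hanti ↦ ?_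
  have := hanti (lt_add_of_pos_right 0 hT)
  rw [hφT] at this
  linarith

lemma exists_tendsto_iterate_sub_div {φ : ℝ → ℝ} {T : ℝ} (hφ : Monotone φ) (hT : 0 < T)
    (hφT : ∀ x, φ (x + T) = φ x + T) :
    ∃ ρ : ℝ, ∀ x, Tendsto (fun n : ℕ ↦ (φ^[n] x - x) / n) atTop (𝓝 ρ) := by
  let f : CircleDeg1Lift :=
    { toFun := fun x ↦ φ (x * T) / T
      monotone' := fun x y hxy ↦ div_le_div_of_nonneg_right (hφ (by gcongr)) hT.le
      map_add_one' := fun x ↦ by rw [add_mul, one_mul, hφT, add_div, div_self hT.ne'] }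
  have hsemi : Semiconj (· * T) f φ := fun x ↦ div_mul_cancel₀ _ hT.ne'
  refine ⟨f.translationNumber * T, fun x ↦ ?_⟩
  refine ((f.tendsto_translationNumber (x / T)).mul_const T).congr fun n ↦ ?_
  have hn : (f ^ n) (x / T) * T = φ^[n] x := by
    rw [CircleDeg1Lift.coe_pow]
    simpa [hT.ne'] using hsemi.iterate_right n (x / T)
  rw [← hn]
  field_simp

lemma exists_tendsto_birkhoffAverage_bdry {g : ℝ × ℝ → ℝ × ℝ} {S : ℝ × ℝ → ℝ}
    (hg : Differentiable ℝ g) (hgb : MapsTo g bdry bdry) (hinj : InjOn g bdry)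
    (hS : ∀ p ∈ bdry, HasFDerivWithinAt S (pullbackDefect liouvilleForm g p) bdry p) :
    ∃ L : ℝ, ∀ p ∈ bdry, Tendsto (fun n ↦ birkhoffAverage ℝ g S n p) atTop (𝓝 L) := by
  obtain ⟨C, hlift⟩ := exists_lift_of_primitive hg hgb hS
  let φ (θ : ℝ) : ℝ := θ + 2 * S (circlePoint θ) + C
  have hφ_per (θ : ℝ) : φ (θ + 2 * π) = φ θ + 2 * π := by
    simp only [φ, circlePoint_add_two_pi]
    ring
  have hφ_cont : Continuous φ := by
    have hSc : Continuous (S ∘ circlePoint) :=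
      ContinuousOn.comp_continuous (fun p hp ↦ (hS p hp).continuousWithinAt)
        (by unfold circlePoint; fun_prop) circlePoint_mem_bdry
    exact (continuous_id.add (hSc.const_mul 2)).add_const C
  have hφ_inj : Injective φ := by
    intro a b hab
    have hpt : circlePoint a = circlePoint b := hinj (circlePoint_mem_bdry a)
      (circlePoint_mem_bdry b) (by rw [hlift, hlift]; exact congrArg circlePoint hab)
    simpa [φ, hpt] using hab
  obtain ⟨ρ, hρ⟩ := exists_tendsto_iterate_sub_div
    (strictMono_of_map_add_const hφ_cont hφ_inj two_pi_pos hφ_per).monotone two_pi_pos hφ_per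
  have hsemi : Semiconj circlePoint φ g := fun θ ↦ (hlift θ).symm
  have hsum (n : ℕ) (θ : ℝ) :
      birkhoffSum g S n (circlePoint θ) = (φ^[n] θ - θ) / 2 - n * (C / 2) := by
    induction n with
    | zero => simp
    | succ n ih =>
      rw [birkhoffSum_succ, ih, ← hsemi.iterate_right n θ, iterate_succ_apply']
      simp only [φ]
      push_cast
      ring
  refine ⟨ρ / 2 - C / 2, fun p hp ↦ ?_⟩
  obtain ⟨θ, rfl⟩ := exists_circlePoint_eq hp
  refine (((hρ θ).div_const 2).sub_const (C / 2)).congr' ?_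
  filter_upwards [eventually_ne_atTop 0] with n hn
  rw [birkhoffAverage, hsum, smul_eq_mul]
  field_simp

end CircleMaps

lemma sigmaPath_iterate_eq_birkhoffSum_sub {g : ℝ × ℝ → ℝ × ℝ} {S : ℝ × ℝ → ℝ}
    (hg : ContDiff ℝ 1 g) (hgD : MapsTo g disk disk)
    (hS : ∀ p ∈ disk, HasFDerivWithinAt S (pullbackDefect liouvilleForm g p) disk p)
    {γ : ℝ → ℝ × ℝ} (hγ : ContDiff ℝ 1 γ) (hγD : MapsTo γ (Icc 0 1) disk) (n : ℕ) :
    sigmaPath γ g^[n] = birkhoffSum g S n (γ 1) - birkhoffSum g S n (γ 0) := by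
  have hgn : ContDiff ℝ 1 g^[n] := contDiff_iterate hg n
  rw [sigmaPath_eq_integral_pullbackDefect (hgn.differentiable one_ne_zero)]
  exact integral_apply_deriv_eq_sub
    (fun _ ↦ hasFDerivWithinAt_birkhoffSum (hg.differentiable one_ne_zero) hgD hS n)
    (continuous_pullbackDefect hgn).continuousOn hγ zero_le_one hγD

theorem sigma_homogenization_path_independent_general {g : ℝ × ℝ → ℝ × ℝ} (hg : ContDiff ℝ 2 g)
    (hgD : BijOn g disk disk) (hjac : ∀ p ∈ disk, jacDet g p = 1) {p₀ : ℝ × ℝ}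
    (hp₀ : IsFixedPt g p₀) :
    ∃ L : ℝ, ∀ γ : ℝ → ℝ × ℝ, ContDiff ℝ 1 γ → γ 0 = p₀ → γ 1 ∈ bdry →
      MapsTo γ (Icc 0 1) disk →
      Tendsto (fun n : ℕ ↦ sigmaPath γ g^[n] / (n : ℝ)) atTop (𝓝 L) := by
  have hg₁ : ContDiff ℝ 1 g := hg.of_le one_le_two
  have hdiff : Differentiable ℝ g := hg₁.differentiable one_ne_zero
  have hdet : ∀ p ∈ disk, (fderiv ℝ g p).det = 1 := fun p hp ↦
    (jacDet_eq_det_fderiv (hdiff p)).symm.trans (hjac p hp)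
  obtain ⟨S, hS⟩ := exists_primitive_pullbackDefect (B := liouvilleForm) convex_disk hg
    fun p hp x y ↦ by rw [liouvilleForm_map_sub_swap, hdet p hp, one_mul]
  have hgb : MapsTo g bdry bdry := mapsTo_bdry_of_bijOn_disk hg₁ hgD
    fun p hp ↦ by simp [hdet p (bdry_subset_disk hp)]
  obtain ⟨L, hL⟩ := exists_tendsto_birkhoffAverage_bdry hdiff hgb
    (hgD.injOn.mono bdry_subset_disk) fun p hp ↦ (hS p (bdry_subset_disk hp)).mono bdry_subset_disk
  refine ⟨L - S p₀, fun γ hγ hγ₀ hγ₁ hγD ↦ ?_⟩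
  refine ((hL _ hγ₁).sub (hp₀.tendsto_birkhoffAverage ℝ S)).congr fun n ↦ ?_
  rw [sigmaPath_iterate_eq_birkhoffSum_sub hg₁ hgD.mapsTo hS hγ hγD, hγ₀, birkhoffAverage,
    birkhoffAverage, ← smul_sub, smul_eq_mul, inv_mul_eq_div]

/-- for any smooth path `γ` in the disk from the origin to the
boundary and any `g ∈ G_o`, the limit `lim_n σ_γ(gⁿ)/n` exists and coincides
with the value computed with the radial path; i.e. the homogenization `σ̄` is
independent of the choice of path. -/
theorem sigma_homogenization_path_independent
    (γ : ℝ → ℝ × ℝ) (hγ : ContDiff ℝ (⊤ : ℕ∞) γ) (hγ0 : γ 0 = (0, 0))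
    (hγ1 : γ 1 ∈ bdry) (hγD : MapsTo γ (Icc (0:ℝ) 1) disk)
    (g : ℝ × ℝ → ℝ × ℝ) (hg : IsSympO g) :
    ∃ L : ℝ,
      Tendsto (fun n : ℕ => sigmaPath γ g^[n] / (n : ℝ)) atTop (𝓝 L) ∧
      Tendsto (fun n : ℕ => sigmaQ g^[n] / (n : ℝ)) atTop (𝓝 L) := by
  obtain ⟨⟨hgs, hgD, hjac, g', -, hgD', hleft, hright⟩, hg₀⟩ := hg
  have hbij : BijOn g disk disk := InvOn.bijOn ⟨hleft, hright⟩ hgD hgD'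
  obtain ⟨L, hL⟩ := sigma_homogenization_path_independent_general
    (contDiff_infty.1 hgs 2) hbij hjac hg₀
  refine ⟨L, hL γ (mod_cast contDiff_infty.1 hγ 1) hγ0 hγ1 hγD, ?_⟩
  simp_rw [sigmaQ_eq_sigmaPath]
  refine hL _ (contDiff_id.prodMk contDiff_const) rfl (by simp [bdry]) fun t ht ↦ ?_
  simpa [disk, abs_of_nonneg ht.1] using ht.2
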